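/- For a positive integer w, the derivative at s = 0 of the (analytically continued) Barnes double zeta function satisfies ζ_B'(0; 1/w, 1, 1) = (1/w) ζ_R'(−1) − (1/(12w)) log w − (1/w) Σ_{j=1}^{w−1} j · log Γ(j/w) + ((w−1)/4) log 2π. -/

import Mathlib

/-- The Barnes double zeta function, defined for `Re s > 2` by the double series
`ζ_B(s; a, b, x) = Σ_{m,n≥0} (a m + b n + x)^{-s}`. -/
noncomputable def barnesZeta (s : ℂ) (a b x : ℝ) : ℂ :=
  ∑' p : ℕ × ℕ, ((a * p.1 + b * p.2 + x : ℝ) : ℂ) ^ (-s)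

open Complex Set Filter Topology HurwitzZeta

lemma aux_interp (g g' g'' : ℝ → ℂ) (C : ℝ) 
    (h1 : ∀ t ∈ Icc (0:ℝ) 1, HasDerivAt g (g' t) t)
    (h2 : ∀ t ∈ Icc (0:ℝ) 1, HasDerivAt g' (g'' t) t)
    (hb : ∀ t ∈ Icc (0:ℝ) 1, ‖g'' t‖ ≤ C) (x : ℝ) (hx : x ∈ Icc (0:ℝ) 1) :
    ‖g x - g 0 - x * (g 1 - g 0)‖ ≤ C := by
  have hC : 0 ≤ C := (norm_nonneg _).trans (hb 0 (by simp))
  have key1 : ∀ u ∈ Icc (0:ℝ) 1, ∀ t ∈ Icc (0:ℝ) 1, ‖g' u - g' t‖ ≤ C := by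
    intro u hu t ht
    have := (convex_Icc (0:ℝ) 1).norm_image_sub_le_of_norm_hasDerivWithin_le
      (fun y hy => (h2 y hy).hasDerivWithinAt) hb ht hu
    refine this.trans ?_
    have : ‖u - t‖ ≤ 1 := by rw [Real.norm_eq_abs, abs_le]; constructor <;> linarith [hu.1, hu.2, ht.1, ht.2]
    nlinarith
  have key2 : ∀ t ∈ Icc (0:ℝ) 1, ‖g' t - (g 1 - g 0)‖ ≤ C := by
    intro t ht
    have := norm_image_sub_le_of_norm_deriv_le_segment_01' (f := fun u : ℝ => g u - u * g' t)
      (f' := fun u => g' u - 1 * g' t) (C := C)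
      (fun u hu => ((h1 u hu).sub ((hasDerivAt_id u).ofReal_comp.mul_const (g' t))).hasDerivWithinAt)
      (fun u hu => by simpa using key1 u (Ico_subset_Icc_self hu) t ht)
    rw [← norm_neg]
    have he : -(g' t - (g 1 - g 0)) = (g 1 - ((1:ℝ):ℂ) * g' t) - (g 0 - ((0:ℝ):ℂ) * g' t) := by
      push_cast; ring
    rw [he]; exact this
  have := norm_image_sub_le_of_norm_deriv_le_segment' (a := 0) (b := 1)
      (f := fun u : ℝ => g u - u * (g 1 - g 0))
      (f' := fun u => g' u - 1 * (g 1 - g 0)) (C := C)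
      (fun u hu => ((h1 u hu).sub ((hasDerivAt_id u).ofReal_comp.mul_const _)).hasDerivWithinAt)
      (fun u hu => by simpa using key2 u (Ico_subset_Icc_self hu)) x hx
  have h3 : ‖g x - g 0 - x * (g 1 - g 0)‖ ≤ C * (x - 0) := by
    have he : g x - g 0 - x * (g 1 - g 0) =
        (g x - x * (g 1 - g 0)) - (g 0 - ((0:ℝ):ℂ) * (g 1 - g 0)) := by
      push_cast; ring
    rw [he]; exact this
  refine h3.trans ?_
  nlinarith [hx.2]

lemma aux_hasDeriv (c : ℝ) (s : ℂ) (t : ℝ) (h : 0 < c + t) :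
    HasDerivAt (fun t : ℝ => ((c + t : ℝ) : ℂ) ^ s) (s * ((c + t : ℝ) : ℂ) ^ (s - 1)) t := by
  have h1 : HasDerivAt (fun z : ℂ => z ^ s) (s * ((c + t : ℝ) : ℂ) ^ (s - 1)) ((c + t : ℝ) : ℂ) := by
    have := (hasDerivAt_id ((c + t : ℝ) : ℂ)).cpow_const (c := s) (Or.inl (by exact_mod_cast h))
    simpa using this
  exact (h1.comp_ofReal).comp_const_add c t

noncomputable def lerchT (x : ℝ) (n : ℕ) (s : ℂ) : ℂ :=
  ((n + 1 + x : ℝ) : ℂ) ^ (-s) - ((n + 1 : ℝ) : ℂ) ^ (-s)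
    + x * (((n + 1 : ℝ) : ℂ) ^ (-s) - ((n + 1 + 1 : ℝ) : ℂ) ^ (-s))

lemma lerchT_bound (x : ℝ) (hx : x ∈ Icc (0:ℝ) 1) (n : ℕ) (s : ℂ) (hs : -1/2 < s.re) (hs' : ‖s‖ < 3) :
    ‖lerchT x n s‖ ≤ 12 * ((n : ℝ) + 1) ^ (-(3/2) : ℝ) := by
  have hn : (0:ℝ) ≤ n := n.cast_nonneg
  have := aux_interp (fun t : ℝ => ((n + 1 + t : ℝ) : ℂ) ^ (-s))
    (fun t : ℝ => (-s) * ((n + 1 + t : ℝ) : ℂ) ^ (-s-1))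
    (fun t : ℝ => (-s) * ((-s-1) * ((n + 1 + t : ℝ) : ℂ) ^ (-s-1-1)))
    (12 * ((n : ℝ) + 1) ^ (-(3/2) : ℝ)) 
    (fun t ht => aux_hasDeriv _ _ _ (by linarith [ht.1]))
    (fun t ht => (aux_hasDeriv _ _ _ (by linarith [ht.1])).const_mul _)
    (fun t ht => ?_) x hx
  · convert this using 2
    simp [lerchT]; ring
  · rw [norm_mul, norm_mul, Complex.norm_cpow_eq_rpow_re_of_pos (by linarith [ht.1]), norm_neg]
    have e1 : ‖-s-1‖ ≤ 4 := by
      calc ‖-s-1‖ ≤ ‖-s‖ + ‖(1:ℂ)‖ := norm_sub_le _ _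
        _ ≤ 4 := by simp; linarith
    have e2 : ((n:ℝ) + 1 + t) ^ (-s-1-1).re ≤ ((n : ℝ) + 1) ^ (-(3/2) : ℝ) := by
      calc ((n:ℝ) + 1 + t) ^ (-s-1-1).re ≤ ((n:ℝ) + 1 + t) ^ (-(3/2) : ℝ) := by
            apply Real.rpow_le_rpow_of_exponent_le (by linarith [ht.1])
            simp; linarith
        _ ≤ _ := Real.rpow_le_rpow_of_nonpos (by positivity) (by linarith [ht.1]) (by norm_num)
    calc ‖s‖ * (‖-s-1‖ * ((n:ℝ) + 1 + t) ^ (-s-1-1).re) 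
        ≤ 3 * (4 * ((n : ℝ) + 1) ^ (-(3/2) : ℝ)) := by
          have : 0 ≤ (n:ℝ) + 1 + t := by linarith [ht.1]
          gcongr
      _ = _ := by ring

lemma lerch_summable : Summable (fun n : ℕ => 12 * ((n : ℝ) + 1) ^ (-(3/2) : ℝ)) := by
  apply Summable.mul_left
  have := (summable_nat_add_iff 1).2 (Real.summable_nat_rpow.2 (by norm_num : (-(3/2) : ℝ) < -1))
  simpa using this

lemma diff_cpow_neg (c : ℝ) (hc : 0 < c) (s : ℂ) :
    HasDerivAt (fun s : ℂ => (c : ℂ) ^ (-s)) (-(Real.log c : ℂ) * (c:ℂ) ^ (-s)) s := by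
  have := (hasDerivAt_id s).neg.const_cpow (c := (c:ℂ)) (Or.inl (by exact_mod_cast hc.ne'))
  simp only [id, Pi.neg_apply] at this
  convert this using 1
  rw [Complex.ofReal_log hc.le]; simp; ring

lemma lerchT_deriv (x : ℝ) (hx : 0 < x) (n : ℕ) (s : ℂ) : HasDerivAt (lerchT x n)
   (-(Real.log (n+1+x) : ℂ) * ((n + 1 + x : ℝ):ℂ) ^ (-s) - -(Real.log (n+1) : ℂ) * ((n + 1 : ℝ):ℂ) ^ (-s)
    + x * (-(Real.log (n+1) : ℂ) * ((n + 1 : ℝ):ℂ) ^ (-s) - -(Real.log (n+1+1) : ℂ) * ((n + 1 + 1 : ℝ):ℂ) ^ (-s))) s := 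
  ((diff_cpow_neg _ (by positivity) s).sub (diff_cpow_neg _ (by positivity) s)).add
    (((diff_cpow_neg _ (by positivity) s).sub (diff_cpow_neg _ (by positivity) s)).const_mul _)

lemma hasSum_zeta1 {s : ℂ} (hs : 1 < s.re) :
    HasSum (fun n : ℕ => 1 / (n : ℂ) ^ s) (riemannZeta s) := by
  have := hasSum_hurwitzZeta_of_one_lt_re (a := 0) (by simp) hs
  simpa [hurwitzZeta_zero] using this

lemma lerchT_hasSum (x : ℝ) (hx : 0 < x) (hx1 : x ≤ 1) {s : ℂ} (hs : 1 < s.re) :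
    HasSum (fun n => lerchT x n s)
      (hurwitzZeta (x : UnitAddCircle) s - riemannZeta s - (x:ℂ) ^ (-s) + x) := by
  have hs0 : s ≠ 0 := by rintro rfl; simp at hs; linarith
  have hH := (hasSum_nat_add_iff' 1).2 (hasSum_hurwitzZeta_of_one_lt_re (a := x) ⟨hx.le, hx1⟩ hs)
  have hZ := (hasSum_nat_add_iff' 1).2 (hasSum_zeta1 hs)
  have hZ2 := (hasSum_nat_add_iff' 2).2 (hasSum_zeta1 hs)
  have := (hH.sub hZ).add ((hZ.sub hZ2).mul_left (x:ℂ))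
  have hv : hurwitzZeta (x : UnitAddCircle) s - riemannZeta s - (x:ℂ) ^ (-s) + x = 
      hurwitzZeta (x : UnitAddCircle) s - ∑ i ∈ Finset.range 1, 1 / ((i:ℂ) + x) ^ s -
       (riemannZeta s - ∑ i ∈ Finset.range 1, 1 / (i:ℂ) ^ s) +
      x * (riemannZeta s - ∑ i ∈ Finset.range 1, 1 / (i:ℂ) ^ s -
       (riemannZeta s - ∑ i ∈ Finset.range 2, 1 / (i:ℂ) ^ s)) := by
    simp [Finset.sum_range_succ, Complex.cpow_neg, hs0]
    ring
  rw [hv]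
  refine this.congr_fun fun n => ?_
  simp only [lerchT, Complex.cpow_neg, one_div]
  push_cast
  simp only [add_assoc]; norm_num

lemma lerchT_eq (x : ℝ) (hx : 0 < x) (hx1 : x ≤ 1) :
    EqOn (fun s => ∑' n, lerchT x n s)
      (fun s => hurwitzZeta (x : UnitAddCircle) s - riemannZeta s - (x:ℂ) ^ (-s) + x) 
      ({s | -1/2 < s.re} ∩ Metric.ball 0 3) := by
  have hU : IsOpen ({s : ℂ | -1/2 < s.re} ∩ Metric.ball 0 3) :=
    (isOpen_lt continuous_const Complex.continuous_re).inter Metric.isOpen_ball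
  have hconv : Convex ℝ ({s : ℂ | -1/2 < s.re} ∩ Metric.ball 0 3) :=
    (convex_halfSpace_re_gt _).inter (convex_ball _ _)
  have hd1 := differentiableOn_tsum_of_summable_norm lerch_summable
    (fun i s _ => (lerchT_deriv x hx i s).differentiableAt.differentiableWithinAt) hU
    (fun i s hs => lerchT_bound x ⟨hx.le, hx1⟩ i s hs.1 (by simpa using hs.2))
  have hd2 : Differentiable ℂ (fun s => hurwitzZeta (x : UnitAddCircle) s - riemannZeta s - (x:ℂ) ^ (-s) + x) := by
    have := differentiable_hurwitzZeta_sub_hurwitzZeta (x : UnitAddCircle) 0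
    simp only [hurwitzZeta_zero] at this
    exact (this.sub (fun s => (diff_cpow_neg x hx s).differentiableAt)).add_const _
  refine (hd1.analyticOnNhd hU).eqOn_of_preconnected_of_eventuallyEq 
    (hd2.differentiableOn.analyticOnNhd hU) hconv.isPreconnected (z₀ := 2) ?_ ?_
  · constructor <;> norm_num
  · have : {s : ℂ | 1 < s.re} ∈ 𝓝 (2:ℂ) := 
      (isOpen_lt continuous_const Complex.continuous_re).mem_nhds (by simp)
    filter_upwards [this] with s hs
    exact (lerchT_hasSum x hx hx1 hs).tsum_eq

lemma lerch (x : ℝ) (hx : 0 < x) (hx1 : x ≤ 1) :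
    deriv (hurwitzZeta (x : UnitAddCircle)) 0 =
      (Real.log (Real.Gamma x) : ℂ) - (Real.log (2 * Real.pi) : ℂ) / 2 := by
  have hU : IsOpen ({s : ℂ | -1/2 < s.re} ∩ Metric.ball 0 3) :=
    (isOpen_lt continuous_const Complex.continuous_re).inter Metric.isOpen_ball
  have h0 : (0:ℂ) ∈ ({s : ℂ | -1/2 < s.re} ∩ Metric.ball 0 3) := by
    constructor <;> norm_num
  have hs := hasSum_deriv_of_summable_norm lerch_summable
    (fun i s _ => (lerchT_deriv x hx i s).differentiableAt.differentiableWithinAt) hU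
    (fun i s hs => lerchT_bound x ⟨hx.le, hx1⟩ i s hs.1 (by simpa using hs.2)) h0
  have he : deriv (fun s => ∑' n, lerchT x n s) 0 = 
      deriv (hurwitzZeta (x : UnitAddCircle)) 0 - deriv riemannZeta 0 - -(Real.log x : ℂ) := by
    rw [((lerchT_eq x hx hx1).eventuallyEq_of_mem (hU.mem_nhds h0)).deriv_eq]
    have := (((differentiableAt_hurwitzZeta (x : UnitAddCircle) (s := 0) (by simp)).hasDerivAt.sub 
      (differentiableAt_riemannZeta (s := 0) (by simp)).hasDerivAt).sub (diff_cpow_neg x hx 0)).add_const (x:ℂ)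
    simpa using this.deriv
  rw [he] at hs
  have ht := hs.tendsto_sum_nat
  have hG := Real.BohrMollerup.tendsto_log_gamma hx
  have hG2 : Tendsto (fun n : ℕ => ((Real.BohrMollerup.logGammaSeq x n + Real.log x + 
     x * (Real.log (n+1) - Real.log n) : ℝ) : ℂ)) atTop (𝓝 ((Real.log (Real.Gamma x) + Real.log x + x * 0 : ℝ) : ℂ)) :=
    (Complex.continuous_ofReal.tendsto _).comp 
      ((hG.add_const _).add (Real.tendsto_log_nat_add_one_sub_log.const_mul x))
  have hfin : ∀ n : ℕ, ∑ i ∈ Finset.range n, deriv (lerchT x i) 0 = ((Real.BohrMollerup.logGammaSeq x n + Real.log x + 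
     x * (Real.log (n+1) - Real.log n) : ℝ) : ℂ) := by
    intro n
    have : ∑ i ∈ Finset.range n, deriv (lerchT x i) 0 = ((∑ i ∈ Finset.range n, 
       (-Real.log (x+(i+1:ℕ)) + Real.log (i+1) + x * (Real.log (i+1+1) - Real.log (i+1))) : ℝ) : ℂ) := by
      push_cast
      refine Finset.sum_congr rfl fun i _ => ?_
      rw [(lerchT_deriv x hx i 0).deriv]
      have : x + ((i:ℝ)+1) = i + 1 + x := by ring
      rw [this]
      simp only [neg_zero, Complex.cpow_zero]; push_cast; ring
    rw [this]
    congr 1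
    rw [Real.BohrMollerup.logGammaSeq, Finset.sum_range_succ']
    have e1 : Real.log (n.factorial) = ∑ i ∈ Finset.range n, Real.log (i+1) := by
      rw [← Finset.prod_range_add_one_eq_factorial]
      push_cast
      rw [Real.log_prod]
      intro i _; positivity
    have e2 := Finset.sum_range_sub (fun i : ℕ => Real.log (i+1)) n
    push_cast at e2
    rw [Finset.sum_add_distrib, Finset.sum_add_distrib, ← Finset.mul_sum, e2, ← e1, Finset.sum_neg_distrib]
    simp; ring
  simp only [hfin] at ht
  have := tendsto_nhds_unique ht hG2
  rw [deriv_riemannZeta_zero] at this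
  rw [Complex.ofReal_log (by positivity : 0 ≤ 2 * Real.pi)]
  push_cast at this ⊢
  linear_combination this

lemma hasSum_antidiag (f : ℕ → ℂ) (S : ℂ) (h : HasSum (fun k : ℕ => ((k:ℂ) + 1) * f k) S) :
    HasSum (fun p : ℕ × ℕ => f (p.1 + p.2)) S := by
  have e : ∀ (k : ℕ) (c : Finset.HasAntidiagonal.antidiagonal k), f (c.1.1 + c.1.2) = f k := by
    intro k c
    rw [Finset.HasAntidiagonal.mem_antidiagonal.1 c.2]
  rw [← Finset.HasAntidiagonal.sigmaAntidiagonalEquivProd.hasSum_iff]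
  have hsum : Summable ((fun p : ℕ × ℕ => f (p.1 + p.2)) ∘ 
      (Finset.HasAntidiagonal.sigmaAntidiagonalEquivProd (A := ℕ))) := by
    apply Summable.of_norm
    rw [summable_sigma_of_nonneg (fun _ => norm_nonneg _)]
    refine ⟨fun k => (hasSum_fintype _).summable, ?_⟩
    refine h.summable.norm.congr fun k => ?_
    have hk : ‖((k:ℂ) + 1)‖ = k + 1 := by
      have := Complex.norm_natCast (k+1)
      push_cast at this; exact this
    simp [tsum_fintype, Finset.HasAntidiagonal.sigmaAntidiagonalEquivProd, e, hk]
  have h2 := hsum.hasSum.sigma (fun k => hasSum_fintype _)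
  have h3 := h.unique (h2.congr_fun fun k => by
    simp [Finset.HasAntidiagonal.sigmaAntidiagonalEquivProd, e])
  rw [h3]
  exact hsum.hasSum

lemma hasSum_prod_fin {α : Type*} (w : ℕ) (g : α × Fin w → ℂ) (S : Fin w → ℂ)
    (h : ∀ r, HasSum (fun a => g (a, r)) (S r)) : HasSum g (∑ r, S r) := by
  have : HasSum (fun b : α × Fin w => ∑ r, if b.2 = r then g b else 0) (∑ r, S r) := by
    refine hasSum_sum fun r _ => ?_
    have hi : Function.Injective (fun a : α => (a, r)) := fun a b h => by simpa using h
    rw [← hi.hasSum_iff]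
    · simpa [Function.comp_def] using h r
    · rintro ⟨a, r'⟩ hx
      have : r' ≠ r := by rintro rfl; exact hx ⟨a, rfl⟩
      simp [this]
  simpa using this

lemma hurwitz_dist (w : ℕ) [NeZero w] {s : ℂ} (hs : 1 < s.re) :
    ∑ r : Fin w, hurwitzZeta (((r : ℝ) / w : ℝ) : UnitAddCircle) s = (w:ℂ) ^ s * riemannZeta s := by
  have hw : (0:ℝ) < w := by exact_mod_cast Nat.pos_of_ne_zero (NeZero.ne w)
  have hwc : (w:ℂ) ≠ 0 := by exact_mod_cast hw.ne'
  have h1 := hasSum_prod_fin w (fun p : ℕ × Fin w => 1 / ((p.1 : ℂ) + ((p.2 / w : ℝ) : ℂ)) ^ s) _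
    (fun r => hasSum_hurwitzZeta_of_one_lt_re (a := (r:ℝ)/w) 
      ⟨by positivity, by rw [div_le_one hw]; exact_mod_cast r.2.le⟩ hs)
  refine h1.unique ?_
  rw [← (Nat.divModEquiv w).hasSum_iff]
  refine ((hasSum_zeta1 hs).mul_left ((w:ℂ)^s)).congr_fun ?_
  intro n
  simp only [Function.comp, Nat.divModEquiv]
  have hn : (n:ℂ) = (((n / w : ℕ) + ((n % w : ℕ) / w : ℝ) : ℝ) : ℂ) * ((w : ℝ) : ℂ) := by
    have : (n:ℂ) = ((w * (n / w) + n % w : ℕ) : ℂ) := by rw [Nat.div_add_mod]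
    rw [this]; push_cast; field_simp
  rw [hn, Complex.mul_cpow_ofReal_nonneg (by positivity) hw.le]
  have : (w:ℂ)^s ≠ 0 := by simp [Complex.cpow_eq_zero_iff, hwc]
  simp
  field_simp

lemma barnes_r (a : ℝ) (ha : 0 ≤ a) (ha1 : a ≤ 1) {s : ℂ} (hs : 2 < s.re) :
    HasSum (fun p : ℕ × ℕ => (((p.1 + p.2 : ℕ) + 1 + a : ℝ) : ℂ) ^ (-s))
      (hurwitzZeta (a : UnitAddCircle) (s - 1) - a * hurwitzZeta (a : UnitAddCircle) s) := by
  refine hasSum_antidiag (fun k => ((k + 1 + a : ℝ) : ℂ) ^ (-s)) _ ?_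
  have h1 := hasSum_hurwitzZeta_of_one_lt_re (a := a) ⟨ha, ha1⟩ (s := s - 1) (by simp; linarith)
  have h2 := (hasSum_hurwitzZeta_of_one_lt_re (a := a) ⟨ha, ha1⟩ (s := s) (by linarith)).mul_left (a:ℂ)
  have hs0 : s ≠ 0 := by rintro rfl; simp at hs; linarith
  have hs1 : s - 1 ≠ 0 := by
    intro h; rw [sub_eq_zero.1 h] at hs; norm_num at hs
  have h3 := (hasSum_nat_add_iff' 1).2 (h1.sub h2)
  have hv : ∑ i ∈ Finset.range 1, (1 / ((i:ℂ) + a) ^ (s - 1) - a * (1 / ((i:ℂ) + a) ^ s)) = 0 := by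
    rcases ha.eq_or_lt with rfl | h
    · simp [hs1]
    · have hp' : (a:ℂ) ≠ 0 := by exact_mod_cast h.ne'
      have : (a:ℂ) ^ s ≠ 0 := by simp [Complex.cpow_eq_zero_iff, hp']
      simp [Complex.cpow_sub _ _ hp']
      field_simp
      ring
  rw [hv, sub_zero] at h3
  refine h3.congr_fun fun k => ?_
  have hp : (0:ℝ) < k + 1 + a := by positivity
  have hp' : ((k:ℂ) + 1 + a) ≠ 0 := by exact_mod_cast hp.ne'
  have : ((k:ℂ) + 1 + a) ^ s ≠ 0 := by simp [Complex.cpow_eq_zero_iff, hp']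
  push_cast
  rw [Complex.cpow_sub _ _ hp', Complex.cpow_neg, Complex.cpow_one]
  field_simp
  ring

lemma barnes_identity (w : ℕ) [NeZero w] {s : ℂ} (hs : 2 < s.re) :
    barnesZeta s (1 / w : ℝ) 1 1 = (w:ℂ) ^ (s-1) * riemannZeta (s-1) -
      ∑ r : Fin w, ((r : ℝ) / w : ℝ) * hurwitzZeta (((r : ℝ) / w : ℝ) : UnitAddCircle) s := by
  have hw : (0:ℝ) < w := by exact_mod_cast Nat.pos_of_ne_zero (NeZero.ne w)
  have h1 := hasSum_prod_fin w (fun p : (ℕ × ℕ) × Fin w => 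
      (((p.1.1 + p.1.2 : ℕ) + 1 + p.2 / w : ℝ) : ℂ) ^ (-s)) _
    (fun r => barnes_r ((r:ℝ)/w) 
      (by positivity) (by rw [div_le_one hw]; exact_mod_cast r.2.le) hs)
  rw [Finset.sum_sub_distrib, hurwitz_dist w (by simp; linarith)] at h1
  refine HasSum.tsum_eq ?_
  let e : ℕ × ℕ ≃ (ℕ × ℕ) × Fin w := 
    { toFun := fun p => ((p.1 / w, p.2), ⟨p.1 % w, Nat.mod_lt _ (Nat.pos_of_ne_zero (NeZero.ne w))⟩)
      invFun := fun q => (w * q.1.1 + q.2, q.1.2)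
      left_inv := fun p => by simp [Nat.div_add_mod]
      right_inv := fun q => by
        rcases q with ⟨⟨a, b⟩, r, hr⟩
        have hw' := Nat.pos_of_ne_zero (NeZero.ne w)
        simp [Nat.mul_add_div hw', Nat.div_eq_of_lt hr, Nat.mod_eq_of_lt hr] }
  rw [← e.hasSum_iff] at h1
  refine h1.congr_fun ?_
  intro p
  simp only [Function.comp, e, Equiv.coe_fn_mk]
  congr 2
  have : (p.1:ℝ) = ((w * (p.1 / w) + p.1 % w : ℕ) : ℝ) := by rw [Nat.div_add_mod]
  rw [this]; push_cast; field_simp; ring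

theorem deriv_barnesZeta_zero (w : ℕ) (hw : 0 < w) (Z : ℂ → ℂ)
    (hZ : DifferentiableOn ℂ Z {s : ℂ | s ≠ 1 ∧ s ≠ 2})
    (hZeq : ∀ s : ℂ, 2 < s.re → Z s = barnesZeta s (1 / w : ℝ) 1 1) :
    deriv Z 0 =
      (1 / w : ℂ) * deriv riemannZeta (-1) - ((Real.log w : ℂ)) / (12 * w) -
        (1 / w : ℂ) * ∑ j ∈ Finset.Icc 1 (w - 1),
          (j : ℂ) * (Real.log (Real.Gamma ((j : ℝ) / w)) : ℂ) +
        (((w : ℂ) - 1) / 4) * (Real.log (2 * Real.pi) : ℂ) := by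
  have : NeZero w := ⟨hw.ne'⟩
  have hwr : (0:ℝ) < w := by exact_mod_cast hw
  have hwc : (w:ℂ) ≠ 0 := by exact_mod_cast hw.ne'
  have hset : {s : ℂ | s ≠ 1 ∧ s ≠ 2} = ({1, 2} : Set ℂ)ᶜ := by ext; simp
  have hU : IsOpen {s : ℂ | s ≠ 1 ∧ s ≠ 2} := by
    rw [hset]; exact (Set.toFinite _).isClosed.isOpen_compl
  have hpre : IsPreconnected {s : ℂ | s ≠ 1 ∧ s ≠ 2} := by
    rw [hset]
    exact ((Set.toFinite _).countable.isConnected_compl_of_one_lt_rank (by simp)).isPreconnected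
  let F : ℂ → ℂ := fun s => (w:ℂ) ^ (s-1) * riemannZeta (s-1) -
      ∑ r : Fin w, ((r : ℝ) / w : ℝ) * hurwitzZeta (((r : ℝ) / w : ℝ) : UnitAddCircle) s
  have hF : ∀ s : ℂ, s ≠ 1 → s ≠ 2 → HasDerivAt F
      (((w:ℂ) ^ (s-1) * Complex.log w * 1) * riemannZeta (s-1) + (w:ℂ) ^ (s-1) * deriv riemannZeta (s-1) -
        ∑ r : Fin w, ((r : ℝ) / w : ℝ) * deriv (hurwitzZeta (((r : ℝ) / w : ℝ) : UnitAddCircle)) s) s := by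
    intro s h1 h2
    have hz : HasDerivAt (fun s => riemannZeta (s-1)) (deriv riemannZeta (s-1)) s := by
      apply HasDerivAt.comp_sub_const
      refine (differentiableAt_riemannZeta ?_).hasDerivAt
      intro h; apply h2; linear_combination h
    refine ((((hasDerivAt_id s).sub_const 1).const_cpow (Or.inl hwc)).mul hz).sub ?_
    refine HasDerivAt.fun_sum fun r _ => ?_
    exact (differentiableAt_hurwitzZeta _ h1).hasDerivAt.const_mul _
  have hEq : EqOn Z F {s : ℂ | s ≠ 1 ∧ s ≠ 2} := by
    have hFd : DifferentiableOn ℂ F {s : ℂ | s ≠ 1 ∧ s ≠ 2} :=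
      fun s hs => (hF s hs.1 hs.2).differentiableAt.differentiableWithinAt
    refine (hZ.analyticOnNhd hU).eqOn_of_preconnected_of_eventuallyEq 
      (hFd.analyticOnNhd hU) hpre (z₀ := 3) (by constructor <;> norm_num) ?_
    have : {s : ℂ | 2 < s.re} ∈ 𝓝 (3:ℂ) := 
      (isOpen_lt continuous_const Complex.continuous_re).mem_nhds (by simp; norm_num)
    filter_upwards [this] with s hs
    rw [hZeq s hs, barnes_identity w hs]
  rw [(hEq.eventuallyEq_of_mem (hU.mem_nhds (by simp))).deriv_eq, (hF 0 (by simp) (by simp)).deriv]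
  have hz1 : riemannZeta (-1) = -1/12 := by
    have := riemannZeta_neg_nat_eq_bernoulli 1
    norm_num [bernoulli_two] at this
    rw [this]; norm_num [bernoulli]
  have hs : ∑ r : Fin w, (((r : ℝ) / w : ℝ) : ℂ) * deriv (hurwitzZeta (((r : ℝ) / w : ℝ) : UnitAddCircle)) 0
      = (1 / w : ℂ) * ∑ j ∈ Finset.Icc 1 (w - 1),
          (j : ℂ) * (Real.log (Real.Gamma ((j : ℝ) / w)) : ℂ) - 
        (((w : ℂ) - 1) / 4) * (Real.log (2 * Real.pi) : ℂ) := by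
    have h1 : ∀ r : Fin w, (((r : ℝ) / w : ℝ) : ℂ) * deriv (hurwitzZeta (((r : ℝ) / w : ℝ) : UnitAddCircle)) 0
       = (fun j : ℕ => (1 / w : ℂ) * ((j : ℂ) * (Real.log (Real.Gamma ((j : ℝ) / w)) : ℂ)) - 
         (j:ℂ) * ((Real.log (2 * Real.pi) : ℂ) / (2 * w))) r := by
      intro r
      rcases Nat.eq_zero_or_pos (r:ℕ) with h | h
      · simp [h]
      · rw [lerch _ (by positivity) (by rw [div_le_one hwr]; exact_mod_cast r.2.le)]
        push_cast
        field_simp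
    rw [Finset.sum_congr rfl (fun r _ => h1 r), Fin.sum_univ_eq_sum_range 
      (fun j : ℕ => (1 / w : ℂ) * ((j : ℂ) * (Real.log (Real.Gamma ((j : ℝ) / w)) : ℂ)) - 
         (j:ℂ) * ((Real.log (2 * Real.pi) : ℂ) / (2 * w))) w]
    rw [Finset.sum_sub_distrib, ← Finset.mul_sum, ← Finset.sum_mul]
    have h2 : ∑ j ∈ Finset.range w, (j:ℂ) = w * (w - 1) / 2 := by
      have := Finset.sum_range_id_mul_two w
      have h3 : ((∑ j ∈ Finset.range w, j : ℕ) : ℂ) * 2 = w * (w - 1) := by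
        rw [← Nat.cast_pred hw]; exact_mod_cast this
      push_cast at h3
      linear_combination h3 / 2
    have h4 : ∑ j ∈ Finset.range w, (j : ℂ) * (Real.log (Real.Gamma ((j : ℝ) / w)) : ℂ) =
        ∑ j ∈ Finset.Icc 1 (w - 1), (j : ℂ) * (Real.log (Real.Gamma ((j : ℝ) / w)) : ℂ) := by
      symm
      apply Finset.sum_subset
      · intro j hj; simp at hj ⊢; omega
      · intro j hj hj'
        simp at hj hj'
        have : j = 0 := by by_contra h; have := hj' (by omega); omega
        simp [this]
    rw [h2, h4]
    congr 1
    field_simp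
    ring
  rw [hs]
  have hl : Complex.log w = (Real.log w : ℂ) := by
    rw [Complex.ofReal_log hwr.le]; simp
  rw [zero_sub, hz1, hl, Complex.cpow_neg_one]
  field_simp
  ring
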